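/- arXiv:2208.05467 — 2 statements merged into one kernel-verified Lean document; each statement's English description precedes it below -/
import Mathlib

section
/- Let Q ⊆ ℝᵐ be a polyhedron with dim(Q) ≥ 4, equipped with an irredundant description, and suppose Q has a non-degenerate vertex, i.e., a vertex contained in exactly dim(Q) facets of Q. Then there exists a linear map π : ℝᵐ → ℝ^{dim(Q)−1} such that π(Q) is full-dimensional in ℝ^{dim(Q)−1} and, for some irredundant description of π(Q), C(π(Q)) ⊄ π(C(Q)). -/
open Matrix

noncomputable section

/-- The polyhedron `{x : Ax = b, Bx ≤ d}`. -/
def polySet {p q n : Type*} [Fintype n] (A : Matrix p n ℝ) (b : p → ℝ)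
    (B : Matrix q n ℝ) (d : q → ℝ) : Set (n → ℝ) :=
  {x | A.mulVec x = b ∧ B.mulVec x ≤ d}

/-- The circuits of the linear description `Ax = b, Bx ≤ d`: nonzero kernel elements `g` of `A`
whose support of `Bg` is inclusion-minimal among nonzero kernel elements. -/
def circuits {p q n : Type*} [Fintype n] (A : Matrix p n ℝ) (B : Matrix q n ℝ) :
    Set (n → ℝ) :=
  {g | A.mulVec g = 0 ∧ g ≠ 0 ∧
    ∀ y : n → ℝ, A.mulVec y = 0 → y ≠ 0 →
      {i | B.mulVec y i ≠ 0} ⊆ {i | B.mulVec g i ≠ 0} →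
      {i | B.mulVec g i ≠ 0} ⊆ {i | B.mulVec y i ≠ 0}}

/-- A face of a polyhedron `P`: either `P` itself or the set of maximizers of a linear
functional over `P` whose supremum is finite and attained. -/
def IsFace {n : Type*} [Fintype n] (P F : Set (n → ℝ)) : Prop :=
  F = P ∨ ∃ (c : n → ℝ) (s : ℝ),
    (∀ y ∈ P, c ⬝ᵥ y ≤ s) ∧ (∃ y ∈ P, c ⬝ᵥ y = s) ∧ F = {x ∈ P | c ⬝ᵥ x = s}

/-- The dimension of the affine span of a set. -/
def spanDim {n : Type*} [Fintype n] (S : Set (n → ℝ)) : ℕ :=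
  Module.finrank ℝ (affineSpan ℝ S).direction

def IsVertex {n : Type*} [Fintype n] (P : Set (n → ℝ)) (v : n → ℝ) : Prop :=
  IsFace P {v}

def IsEdge {n : Type*} [Fintype n] (P F : Set (n → ℝ)) : Prop :=
  IsFace P F ∧ spanDim F = 1

/-- A nonzero vector lying in the direction space of the affine span of some edge of `P`. -/
def IsEdgeDirection {n : Type*} [Fintype n] (P : Set (n → ℝ)) (g : n → ℝ) : Prop :=
  g ≠ 0 ∧ ∃ F, IsEdge P F ∧ g ∈ (affineSpan ℝ F).direction

/-- A facet: a face whose affine span has dimension `dim P - 1`. -/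
def IsFacet {n : Type*} [Fintype n] (P F : Set (n → ℝ)) : Prop :=
  IsFace P F ∧ spanDim F + 1 = spanDim P

/-- A pointed set: contains no affine line. -/
def PointedSet {n : Type*} [Fintype n] (P : Set (n → ℝ)) : Prop :=
  ∀ x v : n → ℝ, (∀ t : ℝ, x + t • v ∈ P) → v = 0

/-- `Ax = b, Bx ≤ d` is an irredundant description of `P`. -/
def Irredundant {p q n : Type*} [Fintype n] (A : Matrix p n ℝ) (b : p → ℝ)
    (B : Matrix q n ℝ) (d : q → ℝ) (P : Set (n → ℝ)) : Prop :=
  P = polySet A b B d ∧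
  {x | A.mulVec x = b} = (affineSpan ℝ P : Set (n → ℝ)) ∧
  ∀ i, IsFacet P {x ∈ P | B.mulVec x i = d i}

/-- A basic solution of the system `Ax = b, Bx ≤ d`: satisfies the equalities, and the rows of
`A` together with the tight rows of `B` span the whole space. -/
def IsBasicSolution {p q n : Type*} [Fintype n] (A : Matrix p n ℝ) (b : p → ℝ)
    (B : Matrix q n ℝ) (d : q → ℝ) (g : n → ℝ) : Prop :=
  A.mulVec g = b ∧
  Submodule.span ℝ (Set.range (fun i => A i) ∪
    (fun i => B i) '' {i | B.mulVec g i = d i}) = ⊤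

lemma aux_eps {ι : Type*} [Finite ι] (a δ : ι → ℝ) (h : ∀ r, 0 < δ r ∨ (δ r = 0 ∧ a r ≤ 0)) :
    ∃ ε : ℝ, 0 < ε ∧ ∀ r, ε * a r ≤ δ r ∧ (0 < δ r → ε * a r < δ r) := by
  have key : ∀ᶠ ε in nhdsWithin (0 : ℝ) (Set.Ioi 0),
      ∀ r, ε * a r ≤ δ r ∧ (0 < δ r → ε * a r < δ r) := by
    rw [Filter.eventually_all]
    intro r
    rcases h r with h1 | ⟨h1, h2⟩
    · have hc : Filter.Tendsto (fun ε : ℝ => ε * a r) (nhdsWithin (0 : ℝ) (Set.Ioi 0))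
          (nhds (0 * a r)) :=
        ((continuous_id.mul continuous_const).tendsto 0).mono_left nhdsWithin_le_nhds
      rw [zero_mul] at hc
      filter_upwards [hc.eventually (gt_mem_nhds h1)] with ε hε
      exact ⟨hε.le, fun _ => hε⟩
    · filter_upwards [self_mem_nhdsWithin] with ε hε
      have hε' : 0 < ε := hε
      refine ⟨?_, fun h3 => absurd h1 h3.ne'⟩
      rw [h1]
      exact mul_nonpos_of_nonneg_of_nonpos hε'.le h2
  obtain ⟨ε, h1, h2⟩ := (key.and self_mem_nhdsWithin).exists
  exact ⟨ε, h2, h1⟩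

lemma aux_dir_ge {n : Type*} [Fintype n] (F : Set (n → ℝ)) (w0 : n → ℝ) (h0 : w0 ∈ F)
    (u : n → ℝ) (h : ∃ ε : ℝ, 0 < ε ∧ w0 + ε • u ∈ F) : u ∈ (affineSpan ℝ F).direction := by
  obtain ⟨ε, hε, hm⟩ := h
  have h1 := AffineSubspace.vsub_mem_direction (mem_affineSpan ℝ hm) (mem_affineSpan ℝ h0)
  have h2 := (affineSpan ℝ F).direction.smul_mem ε⁻¹ h1
  simpa [smul_smul, hε.ne'] using h2

lemma aux_dir_le {n : Type*} [Fintype n] (F : Set (n → ℝ)) (f : (n → ℝ) →ₗ[ℝ] ℝ) (s : ℝ)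
    (h : ∀ x ∈ F, f x = s) (u : n → ℝ) (hu : u ∈ (affineSpan ℝ F).direction) : f u = 0 := by
  have : (affineSpan ℝ F).direction ≤ LinearMap.ker f := by
    rw [direction_affineSpan, vectorSpan_def, Submodule.span_le]
    rintro _ ⟨x, hx, y, hy, rfl⟩
    simp [h x hx, h y hy]
  exact this hu

lemma aux_fm {ι E : Type} [Fintype ι] [AddCommGroup E] [Module ℝ E]
    (α : ι → (E →ₗ[ℝ] ℝ)) (β δ : ι → ℝ) :
    ∃ (κ : Type) (_ : Fintype κ) (a : κ → (E →ₗ[ℝ] ℝ)) (e : κ → ℝ),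
      ∀ w, (∃ t : ℝ, ∀ r, α r w + t * β r ≤ δ r) ↔ ∀ c, a c w ≤ e c := by
  classical
  refine ⟨ι ⊕ ι × ι, inferInstance,
    Sum.elim (fun r => if β r = 0 then α r else 0)
      (fun p => if 0 < β p.1 ∧ β p.2 < 0 then β p.1 • α p.2 - β p.2 • α p.1 else 0),
    Sum.elim (fun r => if β r = 0 then δ r else 0)
      (fun p => if 0 < β p.1 ∧ β p.2 < 0 then β p.1 * δ p.2 - β p.2 * δ p.1 else 0), ?_⟩
  intro w
  constructor
  · rintro ⟨t, ht⟩ (r | ⟨r, r'⟩)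
    · by_cases hr : β r = 0
      · have := ht r
        simpa [hr] using this
      · simp [hr]
    · by_cases hr : 0 < β r ∧ β r' < 0
      · simp only [Sum.elim_inr, hr, and_self, if_true, LinearMap.sub_apply, LinearMap.smul_apply,
          smul_eq_mul]
        have h1 := mul_le_mul_of_nonneg_left (ht r') hr.1.le
        have h2 := mul_le_mul_of_nonneg_left (ht r) (neg_pos.2 hr.2).le
        nlinarith
      · simp [hr]
  · intro h
    -- lower bounds from β < 0, upper bounds from β > 0
    let U : Finset ι := Finset.univ.filter (fun r => 0 < β r)
    let Lo : Finset ι := Finset.univ.filter (fun r => β r < 0)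
    let g : ι → ℝ := fun r => (δ r - α r w) / β r
    have hg : ∀ r ∈ U, ∀ r' ∈ Lo, g r' ≤ g r := by
      intro r hr r' hr'
      have hr1 : 0 < β r := by simpa [U] using hr
      have hr2 : β r' < 0 := by simpa [Lo] using hr'
      have := h (Sum.inr (r, r'))
      simp only [Sum.elim_inr, hr1, hr2, and_self, if_true, LinearMap.sub_apply,
        LinearMap.smul_apply, smul_eq_mul] at this
      simp only [g]
      rw [div_le_iff_of_neg hr2, div_mul_eq_mul_div, div_le_iff₀ hr1]
      nlinarith
    have hz : ∀ r, β r = 0 → α r w ≤ δ r := by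
      intro r hr
      have := h (Sum.inl r)
      simpa [hr] using this
    have ex : ∃ t : ℝ, (∀ r ∈ U, t ≤ g r) ∧ (∀ r ∈ Lo, g r ≤ t) := by
      rcases U.eq_empty_or_nonempty with hU | hU
      · rcases Lo.eq_empty_or_nonempty with hL | hL
        · exact ⟨0, by simp [hU], by simp [hL]⟩
        · exact ⟨Lo.sup' hL g, by simp [hU], fun r hr => Finset.le_sup' g hr⟩
      · exact ⟨U.inf' hU g, fun r hr => Finset.inf'_le g hr,
          fun r' hr' => Finset.le_inf' _ _ (fun r hr => hg r hr r' hr')⟩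
    obtain ⟨t, h1, h2⟩ := ex
    refine ⟨t, fun r => ?_⟩
    rcases lt_trichotomy (β r) 0 with hr | hr | hr
    · have := h2 r (by simp [Lo, hr])
      simp only [g] at this
      rw [div_le_iff_of_neg hr] at this
      linarith
    · rw [hr]; have := hz r hr; linarith
    · have := h1 r (by simp [U, hr])
      simp only [g] at this
      rw [le_div_iff₀ hr] at this
      linarith

lemma aux_poly_irr {k : ℕ} {ι : Type} [Fintype ι] (a : ι → ((Fin k → ℝ) →ₗ[ℝ] ℝ)) (e : ι → ℝ)
    (P : Set (Fin k → ℝ)) (hP : ∀ w, w ∈ P ↔ ∀ i, a i w ≤ e i)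
    (w0 : Fin k → ℝ) (hw0 : w0 ∈ P) (hcore : ∀ w, ∃ ε : ℝ, 0 < ε ∧ w0 + ε • w ∈ P) :
    spanDim P = k ∧ ∃ (q : ℕ) (B : Matrix (Fin q) (Fin k) ℝ) (d : Fin q → ℝ),
      Irredundant (0 : Matrix (Fin 0) (Fin k) ℝ) 0 B d P := by
  classical
  have hdirP : (affineSpan ℝ P).direction = ⊤ := by
    rw [eq_top_iff]
    intro u _
    exact aux_dir_ge P w0 hw0 u (hcore u)
  have hspanP : spanDim P = k := by
    rw [spanDim, hdirP]; simp
  refine ⟨hspanP, ?_⟩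
  let 𝒮 : Set (Finset ι) := {S | ∀ w, w ∈ P ↔ ∀ i ∈ S, a i w ≤ e i}
  have hne : 𝒮.Nonempty := ⟨Finset.univ, by intro w; simp [hP w]⟩
  obtain ⟨S, hSmem, hSmin⟩ := (Set.toFinite 𝒮).exists_minimal hne
  have hS : ∀ w, w ∈ P ↔ ∀ i ∈ S, a i w ≤ e i := hSmem
  have hviol : ∀ i ∈ S, ∃ y, (∀ j ∈ S, j ≠ i → a j y ≤ e j) ∧ e i < a i y := by
    intro i hi
    by_contra hcon
    push Not at hcon
    have hmem : S.erase i ∈ 𝒮 := by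
      intro w
      constructor
      · intro hw j hj
        exact (hS w).1 hw j (Finset.mem_of_mem_erase hj)
      · intro hw
        have hw' : ∀ j ∈ S, j ≠ i → a j w ≤ e j :=
          fun j hj hji => hw j (Finset.mem_erase.2 ⟨hji, hj⟩)
        refine (hS w).2 (fun j hj => ?_)
        by_cases hji : j = i
        · subst hji; exact hcon w hw'
        · exact hw' j hj hji
    have := hSmin hmem (Finset.erase_subset i S)
    exact (Finset.notMem_erase i S) (this hi)
  have hnz : ∀ i ∈ S, a i ≠ 0 := by
    intro i hi h0
    obtain ⟨y, _, hy⟩ := hviol i hi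
    have := (hS w0).1 hw0 i hi
    rw [h0] at hy this
    simp at hy this
    linarith
  have hstrict : ∀ i ∈ S, a i w0 < e i := by
    intro i hi
    obtain ⟨c, hc⟩ : ∃ c, 0 < a i c := by
      by_contra hcon
      push Not at hcon
      apply hnz i hi
      ext1 x
      ext
      simp only [LinearMap.comp_apply, LinearMap.zero_apply]
      apply le_antisymm (hcon _)
      have := hcon (-(LinearMap.single ℝ (fun _ => ℝ) x 1))
      rw [map_neg] at this
      linarith
    obtain ⟨ε, hε, hm⟩ := hcore c
    have := (hS _).1 hm i hi
    rw [map_add, map_smul, smul_eq_mul] at this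
    nlinarith [mul_pos hε hc]
  let eq := S.equivFin
  let idx : Fin S.card → ι := fun j => (eq.symm j).1
  have hidx : ∀ j, idx j ∈ S := fun j => (eq.symm j).2
  let B : Matrix (Fin S.card) (Fin k) ℝ := LinearMap.toMatrix' (LinearMap.pi (fun j => a (idx j)))
  have hB : ∀ x j, B.mulVec x j = a (idx j) x := by
    intro x j
    simp [B, LinearMap.toMatrix'_mulVec]
  refine ⟨S.card, B, fun j => e (idx j), ?_, ?_, ?_⟩
  · ext w
    rw [hS w]
    simp only [polySet, Set.mem_ofPred_eq, Pi.le_def, hB]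
    constructor
    · intro h
      exact ⟨by ext i; exact i.elim0, fun j => h _ (hidx j)⟩
    · rintro ⟨_, h⟩ i hi
      have := h (eq ⟨i, hi⟩)
      simpa [idx] using this
  · have : affineSpan ℝ P = ⊤ := by
      rw [← AffineSubspace.direction_eq_top_iff_of_nonempty]
      · exact hdirP
      · exact ⟨w0, mem_affineSpan ℝ hw0⟩
    rw [this]
    ext w
    simp only [Set.mem_ofPred_eq, AffineSubspace.top_coe, Set.mem_univ, iff_true]
    ext i; exact i.elim0
  · intro j
    set i := idx j with hi
    have hiS : i ∈ S := hidx j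
    obtain ⟨y, hy1, hy2⟩ := hviol i hiS
    have hs := hstrict i hiS
    let t : ℝ := (e i - a i w0) / (a i y - a i w0)
    have hden : 0 < a i y - a i w0 := by linarith
    have ht0 : 0 < t := div_pos (by linarith) hden
    have ht1 : t < 1 := by rw [div_lt_one hden]; linarith
    let z := w0 + t • (y - w0)
    have hzi : a i z = e i := by
      simp only [z, map_add, map_smul, map_sub, smul_eq_mul, t]
      field_simp
      ring
    have hzj : ∀ j ∈ S, j ≠ i → a j z < e j := by
      intro j hj hji
      have h1 := hy1 j hj hji
      have h2 := hstrict j hj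
      simp only [z, map_add, map_smul, map_sub, smul_eq_mul]
      nlinarith
    have hzP : z ∈ P := by
      refine (hS z).2 (fun j hj => ?_)
      by_cases hji : j = i
      · rw [hji, hzi]
      · exact (hzj j hj hji).le
    have hset : {x ∈ P | B.mulVec x j = e i} = {x ∈ P | a i x = e i} := by
      ext x; simp [hB, hi]
    change IsFacet P {x ∈ P | B.mulVec x j = e i}
    constructor
    · right
      refine ⟨B j, e i, ?_, ⟨z, hzP, ?_⟩, ?_⟩
      · intro x hx
        have h1 := (hS x).1 hx i hiS
        have h2 := hB x j
        change B j ⬝ᵥ x = _ at h2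
        rw [h2]; exact h1
      · have h2 := hB z j
        change B j ⬝ᵥ z = _ at h2
        rw [h2]; exact hzi
      · rfl
    · rw [hset, hspanP]
      have hdir : (affineSpan ℝ {x ∈ P | a i x = e i}).direction = LinearMap.ker (a i) := by
        apply le_antisymm
        · intro u hu
          exact aux_dir_le _ (a i) (e i) (fun x hx => hx.2) u hu
        · intro u hu
          have hu' : a i u = 0 := hu
          refine aux_dir_ge {x ∈ P | a i x = e i} z ⟨hzP, hzi⟩ u ?_
          obtain ⟨ε, hε, h⟩ := aux_eps (fun j : S => a j.1 u) (fun j : S => e j.1 - a j.1 z) (by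
            rintro ⟨j, hj⟩
            by_cases hji : j = i
            · right; subst hji; exact ⟨by linarith, by linarith⟩
            · left; have := hzj j hj hji; linarith)
          refine ⟨ε, hε, (hS _).2 (fun j hj => ?_), ?_⟩
          · have := (h ⟨j, hj⟩).1
            simp only [map_add, map_smul, smul_eq_mul] at this ⊢
            linarith
          · simp [hzi, hu']
      rw [spanDim, hdir]
      have := Module.Dual.finrank_ker_add_one_of_ne_zero (f := a i) (hnz i hiS)
      simpa using this

lemma aux_facet_row {k q : ℕ} {B : Matrix (Fin q) (Fin k) ℝ} {d : Fin q → ℝ}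
    {P : Set (Fin k → ℝ)} (hirr : Irredundant (0 : Matrix (Fin 0) (Fin k) ℝ) 0 B d P)
    (f : (Fin k → ℝ) →ₗ[ℝ] ℝ) (s : ℝ) (hf : ∀ x ∈ P, f x ≤ s) (c : Fin k → ℝ) (hc : 0 < f c)
    (w0 : Fin k → ℝ) (hw0 : w0 ∈ P) (hfw0 : f w0 = s)
    (hloc : ∀ u, f u = 0 → ∃ ε : ℝ, 0 < ε ∧ w0 + ε • u ∈ P) :
    ∃ i, ∀ u, B.mulVec u i = 0 ↔ f u = 0 := by
  obtain ⟨h1, _, h3⟩ := hirr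
  have hmem : ∀ x, x ∈ P ↔ ∀ i, B.mulVec x i ≤ d i := by
    intro x
    rw [h1]
    constructor
    · exact fun h => h.2
    · exact fun h => ⟨by ext i; exact i.elim0, h⟩
  have hti : ∃ i, B.mulVec w0 i = d i := by
    by_contra hcon
    push Not at hcon
    obtain ⟨ε, hε, h⟩ := aux_eps (fun i => B.mulVec c i) (fun i => d i - B.mulVec w0 i) (by
      intro i
      left
      have := lt_of_le_of_ne ((hmem w0).1 hw0 i) (hcon i)
      linarith)
    have : w0 + ε • c ∈ P := by
      rw [hmem]
      intro i
      have := (h i).1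
      simp only [Matrix.mulVec_add, Matrix.mulVec_smul, Pi.add_apply, Pi.smul_apply, smul_eq_mul]
      linarith
    have := hf _ this
    simp only [map_add, map_smul, smul_eq_mul] at this
    nlinarith [mul_pos hε hc]
  obtain ⟨i, hi⟩ := hti
  have hle : ∀ u, f u = 0 → B.mulVec u i ≤ 0 := by
    intro u hu
    obtain ⟨ε, hε, hm⟩ := hloc u hu
    have := (hmem _).1 hm i
    simp only [Matrix.mulVec_add, Matrix.mulVec_smul, Pi.add_apply, Pi.smul_apply, smul_eq_mul]
      at this
    by_contra hcon
    push Not at hcon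
    nlinarith [mul_pos hε hcon]
  have hker : ∀ u, f u = 0 → B.mulVec u i = 0 := by
    intro u hu
    apply le_antisymm (hle u hu)
    have := hle (-u) (by simp [hu])
    rw [Matrix.mulVec_neg, Pi.neg_apply] at this
    linarith
  refine ⟨i, fun u => ⟨fun hu => ?_, hker u⟩⟩
  by_contra hfu
  have hall : ∀ w, B.mulVec w i = 0 := by
    intro w
    have := hker (w - (f w / f u) • u) (by simp [hfu])
    simpa [Matrix.mulVec_sub, Matrix.mulVec_smul, hu] using this
  have hd : d i = 0 := by rw [← hi, hall]
  have hset : {x ∈ P | B.mulVec x i = d i} = P := by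
    ext x; simp [hall, hd]
  have := (h3 i).2
  rw [hset] at this
  omega

lemma aux_strict {m p q : ℕ} {A : Matrix (Fin p) (Fin m) ℝ} {b : Fin p → ℝ}
    {B : Matrix (Fin q) (Fin m) ℝ} {d : Fin q → ℝ} {Q : Set (Fin m → ℝ)}
    (hQ : Irredundant A b B d Q) (hne : Q.Nonempty) :
    ∃ x ∈ Q, ∀ r, B.mulVec x r < d r := by
  classical
  obtain ⟨h1, _, h3⟩ := hQ
  have hmem : ∀ x, x ∈ Q ↔ A.mulVec x = b ∧ ∀ i, B.mulVec x i ≤ d i := by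
    intro x; rw [h1]; rfl
  have hone : ∀ r, ∃ x ∈ Q, B.mulVec x r < d r := by
    intro r
    by_contra hcon
    push Not at hcon
    have hset : {x ∈ Q | B.mulVec x r = d r} = Q := by
      ext x
      constructor
      · exact fun h => h.1
      · exact fun h => ⟨h, le_antisymm (((hmem x).1 h).2 r) (hcon x h)⟩
    have := (h3 r).2
    rw [hset] at this
    omega
  have key : ∀ s : Finset (Fin q), ∃ x ∈ Q, ∀ r ∈ s, B.mulVec x r < d r := by
    intro s
    induction s using Finset.induction_on with
    | empty => obtain ⟨x, hx⟩ := hne; exact ⟨x, hx, by simp⟩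
    | insert r s _ ih =>
      obtain ⟨x, hx, hxs⟩ := ih
      obtain ⟨y, hy, hyr⟩ := hone r
      have hx' := (hmem x).1 hx
      have hy' := (hmem y).1 hy
      have hval : ∀ i, B.mulVec ((1/2 : ℝ) • x + (1/2 : ℝ) • y) i
          = (1/2) * B.mulVec x i + (1/2) * B.mulVec y i := by
        intro i
        simp [Matrix.mulVec_add, Matrix.mulVec_smul]
      refine ⟨(1/2 : ℝ) • x + (1/2 : ℝ) • y, (hmem _).2 ⟨?_, fun i => ?_⟩, fun i hi => ?_⟩
      · rw [Matrix.mulVec_add, Matrix.mulVec_smul, Matrix.mulVec_smul, hx'.1, hy'.1, ← add_smul]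
        norm_num
      · rw [hval]
        have := hx'.2 i
        have := hy'.2 i
        linarith
      · rw [hval]
        rcases Finset.mem_insert.1 hi with rfl | hi
        · have := hx'.2 i
          linarith
        · have := hxs i hi
          have := hy'.2 i
          linarith
  obtain ⟨x, hx, h⟩ := key Finset.univ
  exact ⟨x, hx, fun r => h r (Finset.mem_univ r)⟩

lemma aux_coords {m p q n : ℕ} {A : Matrix (Fin p) (Fin m) ℝ} {b : Fin p → ℝ}
    {B : Matrix (Fin q) (Fin m) ℝ} {d : Fin q → ℝ} {Q : Set (Fin m → ℝ)}
    (hQ : Irredundant A b B d Q) (hn : spanDim Q = n) (hpos : 0 < n) (v : Fin m → ℝ)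
    (hv : IsVertex Q v) (hcard : {F | IsFacet Q F ∧ v ∈ F}.ncard = n) :
    v ∈ Q ∧ ∃ (L : (Fin n → ℝ) →ₗ[ℝ] (Fin m → ℝ)) (l : (Fin m → ℝ) →ₗ[ℝ] (Fin n → ℝ))
      (rr : Fin n → Fin q),
      (∀ u, l (L u) = u) ∧ (∀ x, A.mulVec x = 0 ↔ ∃ u, L u = x) ∧
      (∀ k, B.mulVec v (rr k) = d (rr k)) ∧ (∀ k u, B.mulVec (L u) (rr k) = - u k) ∧
      (∀ r, B.mulVec v r = d r → ∃ (k : Fin n) (c : ℝ), 0 < c ∧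
        ∀ u, B.mulVec (L u) r = - (c * u k)) := by
  classical
  have hQ' := hQ
  obtain ⟨h1, h2, h3⟩ := hQ
  have hmem : ∀ x, x ∈ Q ↔ A.mulVec x = b ∧ ∀ i, B.mulVec x i ≤ d i := by
    intro x; rw [h1]; rfl
  -- the vertex is an exposed point
  have hexp : v ∈ Q ∧ ∃ c : Fin m → ℝ, (∀ y ∈ Q, c ⬝ᵥ y ≤ c ⬝ᵥ v) ∧
      ∀ y ∈ Q, c ⬝ᵥ y = c ⬝ᵥ v → y = v := by
    rcases hv with hv | ⟨c, s, hc1, hc2, hc3⟩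
    · exfalso
      rw [← hv] at hn
      have : spanDim ({v} : Set (Fin m → ℝ)) = 0 := by
        rw [spanDim, direction_affineSpan, vectorSpan_singleton]; simp
      omega
    · have hvm : v ∈ {x ∈ Q | c ⬝ᵥ x = s} := by rw [← hc3]; rfl
      refine ⟨hvm.1, c, fun y hy => by rw [hvm.2]; exact hc1 y hy, fun y hy hyv => ?_⟩
      have : y ∈ ({v} : Set (Fin m → ℝ)) := by
        rw [hc3]; exact ⟨hy, by rw [hyv]; exact hvm.2⟩
      exact this
  obtain ⟨hvQ, c, hc1, hc2⟩ := hexp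
  refine ⟨hvQ, ?_⟩
  have hvm := (hmem v).1 hvQ
  let V : Submodule ℝ (Fin m → ℝ) := LinearMap.ker A.mulVecLin
  have hVmem : ∀ x, x ∈ V ↔ A.mulVec x = 0 := by intro x; rfl
  have hVdir : (affineSpan ℝ Q).direction = V := by
    have hva : v ∈ affineSpan ℝ Q := mem_affineSpan ℝ hvQ
    ext x
    rw [← AffineSubspace.vadd_mem_iff_mem_direction x hva, ← SetLike.mem_coe, ← h2, hVmem]
    change A.mulVec (x + v) = b ↔ _
    rw [Matrix.mulVec_add, hvm.1]
    simp
  have hVrank : Module.finrank ℝ V = n := by rw [← hVdir]; exact hn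
  obtain ⟨x0, hx0, hx0s⟩ := aux_strict hQ' ⟨v, hvQ⟩
  let e0 := x0 - v
  have he0V : e0 ∈ V := by
    rw [hVmem, Matrix.mulVec_sub, ((hmem x0).1 hx0).1, hvm.1, sub_self]
  have he0 : ∀ r, B.mulVec v r = d r → B.mulVec e0 r < 0 := by
    intro r hr
    have := hx0s r
    simp only [e0, Matrix.mulVec_sub, Pi.sub_apply]
    linarith
  -- trivial common kernel
  have hker : ∀ u ∈ V, (∀ r, B.mulVec v r = d r → B.mulVec u r = 0) → u = 0 := by
    have half : ∀ u ∈ V, (∀ r, B.mulVec v r = d r → B.mulVec u r = 0) →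
        ∃ ε : ℝ, 0 < ε ∧ v + ε • u ∈ Q := by
      intro u hu h
      obtain ⟨ε, hε, hh⟩ := aux_eps (fun r => B.mulVec u r) (fun r => d r - B.mulVec v r) (by
        intro r
        rcases eq_or_lt_of_le (hvm.2 r) with hr | hr
        · right; exact ⟨by linarith, (h r hr).le⟩
        · left; linarith)
      refine ⟨ε, hε, (hmem _).2 ⟨?_, fun r => ?_⟩⟩
      · rw [Matrix.mulVec_add, Matrix.mulVec_smul, (hVmem u).1 hu, hvm.1]; simp
      · have := (hh r).1
        simp only [Matrix.mulVec_add, Matrix.mulVec_smul, Pi.add_apply, Pi.smul_apply, smul_eq_mul]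
        linarith
    intro u hu h
    obtain ⟨ε, hε, hm1⟩ := half u hu h
    obtain ⟨ε', hε', hm2⟩ := half (-u) (V.neg_mem hu) (by
      intro r hr; rw [Matrix.mulVec_neg, Pi.neg_apply, h r hr, neg_zero])
    have a1 := hc1 _ hm1
    have a2 := hc1 _ hm2
    simp only [dotProduct_add, dotProduct_smul, dotProduct_neg, smul_eq_mul] at a1 a2
    have hcu : c ⬝ᵥ u = 0 := by
      apply le_antisymm
      · by_contra hcon
        push Not at hcon
        nlinarith [mul_pos hε hcon]
      · by_contra hcon
        push Not at hcon
        nlinarith [mul_pos hε' (neg_pos.2 hcon)]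
    have := hc2 _ hm1 (by simp [dotProduct_add, dotProduct_smul, hcu])
    have h0 : ε • u = 0 := by simpa using this
    exact (smul_eq_zero.1 h0).resolve_left hε.ne'
  let Φ : Fin q → Set (Fin m → ℝ) := fun r => {x ∈ Q | B.mulVec x r = d r}
  -- rows with the same facet are proportional
  have hprop : ∀ r r', B.mulVec v r = d r → B.mulVec v r' = d r' → Φ r = Φ r' →
      ∀ u ∈ V, B.mulVec u r' * B.mulVec e0 r = B.mulVec u r * B.mulVec e0 r' := by
    intro r r' hr hr' hΦ u hu
    let fr : (Fin m → ℝ) →ₗ[ℝ] ℝ := (LinearMap.proj r).comp B.mulVecLin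
    let fr' : (Fin m → ℝ) →ₗ[ℝ] ℝ := (LinearMap.proj r').comp B.mulVecLin
    let W := (affineSpan ℝ (Φ r)).direction
    let K := LinearMap.ker fr ⊓ V
    have hWK : W ≤ K := by
      apply le_inf
      · intro w hw
        exact aux_dir_le (Φ r) fr (d r) (fun x hx => hx.2) w hw
      · rw [← hVdir]
        exact AffineSubspace.direction_le (affineSpan_mono ℝ (fun x hx => hx.1))
    have hKV : K < V := by
      refine lt_of_le_of_ne inf_le_right (fun h => ?_)
      have : e0 ∈ K := by rw [h]; exact he0V
      have h0 : B.mulVec e0 r = 0 := this.1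
      have := he0 r hr
      linarith
    have hWrank : Module.finrank ℝ W + 1 = n := by
      have := (h3 r).2
      rw [hn] at this
      exact this
    have hlt := Submodule.finrank_lt_finrank_of_lt hKV
    have hWKeq : W = K := Submodule.eq_of_le_of_finrank_le hWK (by omega)
    have hne := (he0 r hr).ne
    have hwK : u - (B.mulVec u r / B.mulVec e0 r) • e0 ∈ K := by
      refine ⟨?_, V.sub_mem hu (V.smul_mem _ he0V)⟩
      change B.mulVec _ r = 0
      simp [Matrix.mulVec_sub, Matrix.mulVec_smul, hne]
    rw [← hWKeq] at hwK
    have := aux_dir_le (Φ r) fr' (d r') (fun x hx => by rw [hΦ] at hx; exact hx.2) _ hwK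
    change B.mulVec _ r' = 0 at this
    simp only [Matrix.mulVec_sub, Matrix.mulVec_smul, Pi.sub_apply, Pi.smul_apply,
      smul_eq_mul] at this
    field_simp at this
    linarith
  let I : Set (Fin q) := {r | B.mulVec v r = d r}
  let 𝓕 : Set (Set (Fin m → ℝ)) := Φ '' I
  have h𝓕fin : 𝓕.Finite := Set.toFinite _
  have hsub : 𝓕 ⊆ {F | IsFacet Q F ∧ v ∈ F} := by
    rintro _ ⟨r, hr, rfl⟩
    exact ⟨h3 r, hvQ, hr⟩
  have hle : 𝓕.ncard ≤ n := by
    rw [← hcard]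
    exact Set.ncard_le_ncard hsub (Set.finite_of_ncard_pos (by omega))
  have : Fintype 𝓕 := h𝓕fin.fintype
  have hrep : ∀ F : 𝓕, ∃ r, B.mulVec v r = d r ∧ Φ r = F.1 := by
    rintro ⟨_, r, hr, rfl⟩
    exact ⟨r, hr, rfl⟩
  choose rep hrep1 hrep2 using hrep
  let M : V →ₗ[ℝ] (𝓕 → ℝ) :=
    (LinearMap.pi (fun F : 𝓕 => -((LinearMap.proj (rep F)).comp B.mulVecLin))).comp V.subtype
  have hM : ∀ (x : V) F, M x F = - B.mulVec x.1 (rep F) := by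
    intro x F; rfl
  have hMinj : Function.Injective M := by
    rw [← LinearMap.ker_eq_bot, LinearMap.ker_eq_bot']
    intro x hx
    apply Subtype.ext
    refine hker x.1 x.2 (fun r hr => ?_)
    let F : 𝓕 := ⟨Φ r, r, hr, rfl⟩
    have h0 : B.mulVec x.1 (rep F) = 0 := by
      have := congrFun hx F
      rw [hM] at this
      simpa using this
    have := hprop (rep F) r (hrep1 F) hr (hrep2 F) x.1 x.2
    rw [h0, zero_mul] at this
    exact (mul_eq_zero.1 this).resolve_right (he0 _ (hrep1 F)).ne
  have hcard𝓕 : Fintype.card 𝓕 = n := by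
    apply le_antisymm
    · rw [← Nat.card_coe_set_eq, Nat.card_eq_fintype_card] at hle
      exact hle
    · have := LinearMap.finrank_le_finrank_of_injective hMinj
      rw [hVrank, Module.finrank_fintype_fun_eq_card] at this
      exact this
  let eqv : Fin n ≃ 𝓕 := (finCongr hcard𝓕.symm).trans (Fintype.equivFin 𝓕).symm
  let E : V ≃ₗ[ℝ] (𝓕 → ℝ) := LinearEquiv.ofInjectiveOfFinrankEq M hMinj (by
    rw [hVrank, Module.finrank_fintype_fun_eq_card, hcard𝓕])
  have hE : ∀ x, E x = M x := fun x => rfl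
  let E' : (Fin n → ℝ) ≃ₗ[ℝ] V := (LinearEquiv.funCongrLeft ℝ ℝ eqv.symm).trans E.symm
  have hE' : ∀ u k, B.mulVec (E' u).1 (rep (eqv k)) = - u k := by
    intro u k
    have h := hM (E' u) (eqv k)
    rw [← hE] at h
    have h' : E (E' u) = LinearEquiv.funCongrLeft ℝ ℝ eqv.symm u := by
      simp [E']
    rw [h'] at h
    simp [LinearEquiv.funCongrLeft_apply, LinearMap.funLeft_apply] at h
    linarith
  let L : (Fin n → ℝ) →ₗ[ℝ] (Fin m → ℝ) := V.subtype.comp E'.toLinearMap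
  have hLinj : LinearMap.ker L = ⊥ := by
    rw [LinearMap.ker_eq_bot]
    exact Subtype.val_injective.comp E'.injective
  obtain ⟨l, hl⟩ := L.exists_leftInverse_of_injective hLinj
  refine ⟨L, l, fun k => rep (eqv k), fun u => LinearMap.congr_fun hl u, fun x => ?_,
    fun k => hrep1 _, fun k u => hE' u k, fun r hr => ?_⟩
  · rw [← hVmem]
    constructor
    · intro hx
      exact ⟨E'.symm ⟨x, hx⟩, by simp [L]⟩
    · rintro ⟨u, rfl⟩
      exact (E' u).2
  · let F : 𝓕 := ⟨Φ r, r, hr, rfl⟩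
    have n1 := he0 _ (hrep1 F)
    have n2 := he0 _ hr
    refine ⟨eqv.symm F, B.mulVec e0 r / B.mulVec e0 (rep F), div_pos_of_neg_of_neg n2 n1,
      fun u => ?_⟩
    have h := hprop (rep F) r (hrep1 F) hr (hrep2 F) (L u) (E' u).2
    have h' := hE' u (eqv.symm F)
    rw [Equiv.apply_symm_apply] at h'
    change B.mulVec (L u) (rep F) = _ at h'
    rw [h'] at h
    have := n1.ne
    field_simp
    linarith

lemma aux_ratio_finite {m p q : ℕ} (A : Matrix (Fin p) (Fin m) ℝ) (B : Matrix (Fin q) (Fin m) ℝ)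
    (hker : ∀ u, A.mulVec u = 0 → (∀ r, B.mulVec u r = 0) → u = 0)
    (f g : (Fin m → ℝ) →ₗ[ℝ] ℝ) : ((fun c => f c / g c) '' circuits A B).Finite := by
  classical
  let ratio : (Fin m → ℝ) → ℝ := fun c => f c / g c
  let supp : (Fin m → ℝ) → Set (Fin q) := fun c => {i | B.mulVec c i ≠ 0}
  have hsame : ∀ c ∈ circuits A B, ∀ c' ∈ circuits A B, supp c = supp c' → ratio c = ratio c' := by
    intro c hc c' hc' hs
    obtain ⟨i, hi⟩ : ∃ i, B.mulVec c i ≠ 0 := by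
      by_contra hcon
      push Not at hcon
      exact hc.2.1 (hker c hc.1 hcon)
    have hi' : B.mulVec c' i ≠ 0 := by
      have : i ∈ supp c := hi
      rw [hs] at this; exact this
    let y := B.mulVec c' i • c - B.mulVec c i • c'
    have hBy : ∀ j, B.mulVec y j = B.mulVec c' i * B.mulVec c j - B.mulVec c i * B.mulVec c' j := by
      intro j
      simp [y, Matrix.mulVec_sub, Matrix.mulVec_smul]
    have hy : y = 0 := by
      by_contra hy
      have hAy : A.mulVec y = 0 := by
        simp [y, Matrix.mulVec_sub, Matrix.mulVec_smul, hc.1, hc'.1]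
      have := hc.2.2 y hAy hy (by
        intro j hj
        by_contra hcj
        have h0 : B.mulVec c j = 0 := by
          by_contra h; exact hcj h
        have h0' : B.mulVec c' j = 0 := by
          by_contra h
          have : j ∈ supp c' := h
          rw [← hs] at this
          exact this h0
        apply hj
        rw [hBy, h0, h0']; ring)
      have hiy : B.mulVec y i ≠ 0 := this hi
      apply hiy
      rw [hBy]; ring
    have hcc : c' = (B.mulVec c' i / B.mulVec c i) • c := by
      have h := sub_eq_zero.1 hy
      rw [div_eq_inv_mul, mul_smul, h, smul_smul, inv_mul_cancel₀ hi, one_smul]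
    have ht : B.mulVec c' i / B.mulVec c i ≠ 0 := div_ne_zero hi' hi
    simp only [ratio]
    conv_rhs => rw [hcc]
    rw [map_smul, map_smul, smul_eq_mul, smul_eq_mul, mul_div_mul_left _ _ ht]
  let G : Set (Fin q) → ℝ := fun s =>
    if h : ∃ c ∈ circuits A B, supp c = s then ratio h.choose else 0
  refine (Set.finite_range G).subset ?_
  rintro _ ⟨c, hc, rfl⟩
  refine ⟨supp c, ?_⟩
  have h : ∃ c' ∈ circuits A B, supp c' = supp c := ⟨c, hc, rfl⟩
  simp only [G, dif_pos h]
  exact hsame _ h.choose_spec.1 _ hc h.choose_spec.2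

lemma aux_core {m p q N : ℕ} {A : Matrix (Fin p) (Fin m) ℝ} {b : Fin p → ℝ}
    {B : Matrix (Fin q) (Fin m) ℝ} {d : Fin q → ℝ} {Q : Set (Fin m → ℝ)}
    (hQ : Irredundant A b B d Q) (hn : spanDim Q = N + 4) (v : Fin m → ℝ)
    (hv : IsVertex Q v) (hcard : {F | IsFacet Q F ∧ v ∈ F}.ncard = N + 4) :
    ∃ π : (Fin m → ℝ) →ₗ[ℝ] (Fin (N + 3) → ℝ),
      spanDim ((fun x => π x) '' Q) = N + 3 ∧
      ∃ (pP qP : ℕ)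
        (AP : Matrix (Fin pP) (Fin (N + 3)) ℝ) (bP : Fin pP → ℝ)
        (BP : Matrix (Fin qP) (Fin (N + 3)) ℝ) (dP : Fin qP → ℝ),
        Irredundant AP bP BP dP ((fun x => π x) '' Q) ∧
        ¬ (circuits AP BP ⊆ (fun x => π x) '' circuits A B) := by
  classical
  obtain ⟨hvQ, L, l, rr, hlL, hL, hrrv, hrrL, htight⟩ :=
    aux_coords hQ hn (by omega) v hv hcard
  have hmem0 : ∀ x, x ∈ Q ↔ A.mulVec x = b ∧ ∀ i, B.mulVec x i ≤ d i := by
    intro x; rw [hQ.1]; rfl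
  have hvm := (hmem0 v).1 hvQ
  let δ : Fin q → ℝ := fun r => d r - B.mulVec v r
  have hδ : ∀ r, 0 ≤ δ r := fun r => sub_nonneg.2 (hvm.2 r)
  -- `R` is the copy of `Q` in coordinates
  let R : Set (Fin (N + 4) → ℝ) := {u | ∀ r, B.mulVec (L u) r ≤ δ r}
  have hRmem : ∀ u, u ∈ R ↔ ∀ r, B.mulVec (L u) r ≤ δ r := fun u => Iff.rfl
  have hRQ : ∀ u, u ∈ R ↔ v + L u ∈ Q := by
    intro u
    rw [hmem0, Matrix.mulVec_add, (hL (L u)).2 ⟨u, rfl⟩, hvm.1, hRmem]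
    simp only [add_zero, true_and, Matrix.mulVec_add, Pi.add_apply, δ]
    exact forall_congr' fun r => ⟨fun h => by linarith, fun h => by linarith⟩
  have hQR : ∀ x ∈ Q, ∃ u ∈ R, x = v + L u := by
    intro x hx
    obtain ⟨u, hu⟩ := (hL (x - v)).1 (by
      rw [Matrix.mulVec_sub, ((hmem0 x).1 hx).1, hvm.1, sub_self])
    have hxu : x = v + L u := by rw [hu]; abel
    exact ⟨u, (hRQ u).2 (hxu ▸ hx), hxu⟩
  have hRpos : ∀ u ∈ R, ∀ k, 0 ≤ u k := by
    intro u hu k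
    have := hu (rr k)
    rw [hrrL] at this
    have h0 : δ (rr k) = 0 := by simp [δ, hrrv k]
    linarith
  have hker : ∀ u, A.mulVec u = 0 → (∀ r, B.mulVec u r = 0) → u = 0 := by
    intro x hx h
    obtain ⟨u, rfl⟩ := (hL x).1 hx
    have : u = 0 := by
      ext k
      have := h (rr k)
      rw [hrrL] at this
      simpa using this
    rw [this, map_zero]
  -- the generic slope
  obtain ⟨ρ, hρneg, hρ⟩ : ∃ ρ : ℝ, ρ < 0 ∧
      ρ ∉ ((fun c => l c 1 / l c 0) '' circuits A B) ∪
        ((fun c => l c 3 / l c 2) '' circuits A B) := by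
    have f1 := aux_ratio_finite A B hker ((LinearMap.proj 1).comp l) ((LinearMap.proj 0).comp l)
    have f2 := aux_ratio_finite A B hker ((LinearMap.proj 3).comp l) ((LinearMap.proj 2).comp l)
    obtain ⟨ρ, h1, h2⟩ := (Set.Iio_infinite (0 : ℝ)).exists_notMem_finite (f1.union f2)
    exact ⟨ρ, h1, h2⟩
  let z : Fin (N + 4) → ℝ := fun i => if i = 0 ∨ i = 2 then 1 else ρ
  have hz0 : z 0 = 1 := by simp [z]
  have hz2 : z 2 = 1 := by simp [z]
  have hz1 : z 1 = ρ := by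
    have h1 : (1 : Fin (N + 4)) ≠ 2 := by
      simp [Fin.ext_iff, Nat.mod_eq_of_lt (show 2 < N + 4 by omega),
      Nat.mod_eq_of_lt (show 3 < N + 4 by omega)]
    simp [z, h1]
  have hz : ∀ j, j ≠ 0 → j ≠ 2 → z j = ρ := by
    intro j h0 h2
    simp [z, h0, h2]
  let T : (Fin (N + 4) → ℝ) →ₗ[ℝ] (Fin (N + 3) → ℝ) :=
    LinearMap.pi fun k => LinearMap.proj k.succ - z k.succ • LinearMap.proj 0
  have hT : ∀ u k, T u k = u k.succ - z k.succ * u 0 := fun u k => rfl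
  let s : (Fin (N + 3) → ℝ) →ₗ[ℝ] (Fin (N + 4) → ℝ) :=
    LinearMap.pi (Fin.cons 0 (fun k => LinearMap.proj k))
  have hs0 : ∀ w, s w 0 = 0 := fun w => rfl
  have hss : ∀ w k, s w (Fin.succ k) = w k := fun w k => rfl
  have hTs : ∀ w, T (s w) = w := by
    intro w; ext k; rw [hT, hss, hs0]; ring
  have hsT : ∀ u, s (T u) = u - u 0 • z := by
    intro u
    ext k
    refine Fin.cases ?_ (fun k => ?_) k
    · simp [hs0, hz0]
    · rw [hss, hT]; simp; ring
  have hTz : T z = 0 := by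
    ext k; rw [hT, hz0]; simp
  let π : (Fin m → ℝ) →ₗ[ℝ] (Fin (N + 3) → ℝ) := T.comp l
  have hπL : ∀ u, π (L u) = T u := by
    intro u; simp [π, hlL]
  set P : Set (Fin (N + 3) → ℝ) := (fun x => π x) '' Q with hPdef
  have hPR : ∀ u ∈ R, π v + T u ∈ P := by
    intro u hu
    exact ⟨v + L u, (hRQ u).1 hu, by simp [hπL]⟩
  have hRP : ∀ w ∈ P, ∃ u ∈ R, w = π v + T u := by
    rintro _ ⟨x, hx, rfl⟩
    obtain ⟨u, hu, rfl⟩ := hQR x hx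
    exact ⟨u, hu, by simp [hπL]⟩
  have hPt : ∀ w, w ∈ P ↔ ∃ t : ℝ, ∀ r, B.mulVec (L (s (w - π v) + t • z)) r ≤ δ r := by
    intro w
    constructor
    · intro hw
      obtain ⟨u, hu, rfl⟩ := hRP w hw
      refine ⟨u 0, ?_⟩
      have : s (π v + T u - π v) + u 0 • z = u := by
        rw [add_sub_cancel_left, hsT]; abel
      rw [this]; exact hu
    · rintro ⟨t, ht⟩
      have := hPR _ ht
      rw [map_add, map_smul, hTz, hTs] at this
      simpa using this
  obtain ⟨κ, _, a, e, hae⟩ := aux_fm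
    (fun r : Fin q => ((LinearMap.proj r).comp B.mulVecLin).comp (L.comp s))
    (fun r => B.mulVec (L z) r) (fun r => δ r + B.mulVec (L (s (π v))) r)
  have hPae : ∀ w, w ∈ P ↔ ∀ c, a c w ≤ e c := by
    intro w
    rw [hPt, ← hae]
    refine exists_congr fun t => forall_congr' fun r => ?_
    simp only [map_add, map_sub, map_smul, Matrix.mulVec_add, Matrix.mulVec_sub,
      Matrix.mulVec_smul, Pi.add_apply, Pi.sub_apply, Pi.smul_apply, smul_eq_mul,
      LinearMap.comp_apply, LinearMap.proj_apply, Matrix.mulVecLin_apply]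
    constructor <;> intro h <;> linarith
  -- a core point
  obtain ⟨x0, hx0, hx0s⟩ := aux_strict hQ ⟨v, hvQ⟩
  obtain ⟨u0, hu0, hxu0⟩ := hQR x0 hx0
  have hu0s : ∀ r, B.mulVec (L u0) r < δ r := by
    intro r
    have := hx0s r
    rw [hxu0, Matrix.mulVec_add, Pi.add_apply] at this
    simp only [δ]; linarith
  have hcore : ∀ w, ∃ ε : ℝ, 0 < ε ∧ (π v + T u0) + ε • w ∈ P := by
    intro w
    obtain ⟨ε, hε, h⟩ := aux_eps (fun r => B.mulVec (L (s w)) r)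
      (fun r => δ r - B.mulVec (L u0) r) (fun r => Or.inl (sub_pos.2 (hu0s r)))
    refine ⟨ε, hε, ?_⟩
    have hm : u0 + ε • s w ∈ R := by
      intro r
      have := (h r).1
      simp only [map_add, map_smul, Matrix.mulVec_add, Matrix.mulVec_smul, Pi.add_apply,
        Pi.smul_apply, smul_eq_mul]
      linarith
    have := hPR _ hm
    rw [map_add, map_smul, hTs, ← add_assoc] at this
    exact this
  obtain ⟨hspan, qP, BP, dP, hirr⟩ := aux_poly_irr a e P hPae _ (hPR u0 hu0) hcore
  refine ⟨π, hspan, 0, qP, 0, 0, BP, dP, hirr, ?_⟩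
  -- facets coming from ridges
  have hrow : ∀ i j : Fin (N + 4), i ≠ j → z i = 1 → z j = ρ →
      ∃ r, ∀ w, BP.mulVec w r = 0 ↔ ρ * s w i - s w j = 0 := by
    intro i j hij hi hj
    let f : (Fin (N + 3) → ℝ) →ₗ[ℝ] ℝ :=
      (ρ • LinearMap.proj i - LinearMap.proj j : (Fin (N + 4) → ℝ) →ₗ[ℝ] ℝ).comp s
    have hf : ∀ w, f w = ρ * s w i - s w j := fun w => rfl
    have hfT : ∀ u, f (T u) = ρ * u i - u j := by
      intro u
      rw [hf, hsT]
      simp [hi, hj]; ring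
    -- relative interior point of the ridge
    let p0 : Fin (N + 4) → ℝ := fun k => if k = i ∨ k = j then 0 else 1
    have hp0 : ∀ k, 0 ≤ p0 k := by
      intro k; simp only [p0]; split_ifs <;> norm_num
    obtain ⟨ε, hε, hεr⟩ := aux_eps (fun r => B.mulVec (L p0) r) δ (by
      intro r
      rcases eq_or_lt_of_le (hδ r) with h | h
      · right
        refine ⟨h.symm, ?_⟩
        obtain ⟨k, c, hc, hk⟩ := htight r (by simp only [δ] at h; linarith)
        have := mul_nonneg hc.le (hp0 k)
        rw [hk]; linarith
      · exact Or.inl h)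
    have hpR : ε • p0 ∈ R := by
      intro r
      have := (hεr r).1
      simpa [Matrix.mulVec_smul] using this
    have hloc : ∀ u : Fin (N + 4) → ℝ, u i = 0 → u j = 0 →
        ∃ η : ℝ, 0 < η ∧ ε • p0 + η • u ∈ R := by
      intro u hui huj
      obtain ⟨η, hη, hηr⟩ := aux_eps (fun r => B.mulVec (L u) r)
        (fun r => δ r - ε * B.mulVec (L p0) r) (by
        intro r
        rcases eq_or_lt_of_le (hδ r) with h | h
        · obtain ⟨k, c, hc, hk⟩ := htight r (by simp only [δ] at h; linarith)
          by_cases hkij : k = i ∨ k = j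
          · right
            have hpk : p0 k = 0 := by simp [p0, hkij]
            have huk : u k = 0 := by
              rcases hkij with rfl | rfl <;> assumption
            rw [hk, hk, hpk, huk, ← h]; simp
          · left
            have hpk : p0 k = 1 := by simp [p0, hkij]
            rw [hk, hpk, ← h]
            have := mul_pos hε hc
            linarith
        · left
          exact sub_pos.2 ((hεr r).2 h))
      refine ⟨η, hη, fun r => ?_⟩
      have := (hηr r).1
      simp only [map_add, map_smul, Matrix.mulVec_add, Matrix.mulVec_smul, Pi.add_apply,
        Pi.smul_apply, smul_eq_mul]
      linarith
    have hpi : p0 i = 0 := by simp [p0]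
    have hpj : p0 j = 0 := by simp [p0]
    refine aux_facet_row hirr f (f (π v)) ?_ (T (-(Pi.single j 1))) ?_ (π v + T (ε • p0))
      (hPR _ hpR) ?_ ?_
    · intro w hw
      obtain ⟨u, hu, rfl⟩ := hRP w hw
      rw [map_add, hfT]
      have h1 := hRpos u hu i
      have h2 := hRpos u hu j
      nlinarith
    · rw [hfT]; simp [hij]
    · rw [map_add, hfT]; simp [hpi, hpj]
    · intro w hw
      rw [hf] at hw
      obtain ⟨η, hη, h⟩ := hloc (s w - s w i • z) (by simp [hi]) (by simp [hj]; linarith)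
      refine ⟨η, hη, ?_⟩
      have := hPR _ h
      rw [map_add, map_smul, map_smul, map_sub, hTs, map_smul, hTz, smul_zero, sub_zero] at this
      rw [map_smul, add_assoc]
      exact this
  -- the target circuit
  have h10 : (1 : Fin (N + 4)) ≠ 0 := by simp
  have h12 : (1 : Fin (N + 4)) ≠ 2 := by
    simp [Fin.ext_iff, Nat.mod_eq_of_lt (show 2 < N + 4 by omega),
      Nat.mod_eq_of_lt (show 3 < N + 4 by omega)]
  have h20 : (2 : Fin (N + 4)) ≠ 0 := by
    simp [Fin.ext_iff, Nat.mod_eq_of_lt (show 2 < N + 4 by omega),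
      Nat.mod_eq_of_lt (show 3 < N + 4 by omega)]
  have h30 : (3 : Fin (N + 4)) ≠ 0 := by
    simp [Fin.ext_iff, Nat.mod_eq_of_lt (show 2 < N + 4 by omega),
      Nat.mod_eq_of_lt (show 3 < N + 4 by omega)]
  have h31 : (3 : Fin (N + 4)) ≠ 1 := by
    simp [Fin.ext_iff, Nat.mod_eq_of_lt (show 2 < N + 4 by omega),
      Nat.mod_eq_of_lt (show 3 < N + 4 by omega)]
  have h32 : (3 : Fin (N + 4)) ≠ 2 := by
    simp [Fin.ext_iff, Nat.mod_eq_of_lt (show 2 < N + 4 by omega),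
      Nat.mod_eq_of_lt (show 3 < N + 4 by omega)]
  let g' : Fin (N + 4) → ℝ := fun i => if i = 0 then 1 else if i = 1 then ρ else 0
  have hg0 : g' 0 = 1 := by simp [g']
  have hg1 : g' 1 = ρ := by simp [g', h10]
  have hg : ∀ j, j ≠ 0 → j ≠ 1 → g' j = 0 := by
    intro j h0 h1; simp [g', h0, h1]
  have hsg : s (T g') = g' - z := by rw [hsT, hg0, one_smul]
  intro hsubset
  have hgcirc : T g' ∈ circuits (0 : Matrix (Fin 0) (Fin (N + 3)) ℝ) BP := by
    refine ⟨by ext i; exact i.elim0, ?_, ?_⟩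
    · intro h0
      have h := congrFun hsg 2
      rw [h0, map_zero] at h
      simp [hg 2 h20 h12.symm, hz2] at h
    · intro y _ hy hsub
      have hvan : ∀ i j : Fin (N + 4), i ≠ j → z i = 1 → z j = ρ →
          ρ * g' i - g' j = 0 → ρ * s y i = s y j := by
        intro i j hij hi hj hgij
        obtain ⟨r, hr⟩ := hrow i j hij hi hj
        have hgr : BP.mulVec (T g') r = 0 := by
          rw [hr, hsg]
          simp only [Pi.sub_apply, hi, hj]
          linarith
        have hyr : BP.mulVec y r = 0 := by
          by_contra h
          exact hsub h hgr
        have := (hr y).1 hyr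
        linarith
      have hy1 : s y 1 = 0 := by
        have := hvan 0 1 h10.symm hz0 hz1 (by rw [hg0, hg1]; ring)
        rw [hs0] at this
        linarith
      have hyj : ∀ j, j ≠ 0 → j ≠ 1 → j ≠ 2 → s y j = ρ * s y 2 := by
        intro j h0 h1 h2
        exact (hvan 2 j h2.symm hz2 (hz j h0 h2) (by
          rw [hg 2 h20 h12.symm, hg j h0 h1]; ring)).symm
      have hsy : s y = s y 2 • (z - g') := by
        ext j
        simp only [Pi.smul_apply, Pi.sub_apply, smul_eq_mul]
        by_cases h0 : j = 0
        · subst h0; rw [hs0, hz0, hg0]; ring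
        by_cases h1 : j = 1
        · subst h1; rw [hy1, hz1, hg1]; ring
        by_cases h2 : j = 2
        · subst h2; rw [hz2, hg 2 h20 h12.symm]; ring
        · rw [hyj j h0 h1 h2, hz j h0 h2, hg j h0 h1]; ring
      have hyT : y = (-(s y 2)) • T g' := by
        conv_lhs => rw [← hTs y, hsy]
        rw [map_smul, map_sub, hTz, zero_sub, smul_neg, neg_smul]
      have hne : s y 2 ≠ 0 := by
        intro h
        apply hy
        rw [hyT, h]; simp
      intro r hr
      change BP.mulVec y r ≠ 0
      rw [hyT, Matrix.mulVec_smul, Pi.smul_apply, smul_eq_mul]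
      exact mul_ne_zero (neg_ne_zero.2 hne) hr
  obtain ⟨c, hc, hcg⟩ := hsubset hgcirc
  obtain ⟨u, rfl⟩ := (hL c).1 hc.1
  have hcg' : T u = T g' := by rw [← hπL]; exact hcg
  have hu : u = g' + (u 0 - 1) • z := by
    have h1 := hsT u
    rw [hcg', hsg] at h1
    have h2 : u = (g' - z) + u 0 • z := by rw [h1]; abel
    conv_lhs => rw [h2]
    rw [sub_smul, one_smul]; abel
  have hu1 : u 1 = ρ * u 0 := by
    have := congrFun hu 1
    simp only [Pi.add_apply, Pi.smul_apply, smul_eq_mul, hg1, hz1] at this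
    linarith
  have hu2 : u 2 = u 0 - 1 := by
    have := congrFun hu 2
    simp only [Pi.add_apply, Pi.smul_apply, smul_eq_mul, hg 2 h20 h12.symm, hz2] at this
    linarith
  have hu3 : u 3 = ρ * u 2 := by
    have := congrFun hu 3
    simp only [Pi.add_apply, Pi.smul_apply, smul_eq_mul, hg 3 h30 h31, hz 3 h30 h32] at this
    rw [hu2]; linarith
  apply hρ
  by_cases h0 : u 0 = 0
  · right
    refine ⟨L u, hc, ?_⟩
    simp only [hlL]
    have : u 2 ≠ 0 := by rw [hu2, h0]; norm_num
    rw [hu3]; field_simp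
  · left
    refine ⟨L u, hc, ?_⟩
    simp only [hlL]
    rw [hu1]; field_simp

/-- If `Q` (with an irredundant description) has `dim Q ≥ 4` and a
non-degenerate vertex (a vertex lying in exactly `dim Q` facets), then there is a linear map
`π : ℝᵐ → ℝ^{dim Q - 1}` such that `π(Q)` is full-dimensional and, for some irredundant
description of `π(Q)`, `C(π(Q)) ⊄ π(C(Q))`. -/
theorem stmt_18 {m pQ qQ : ℕ}
    (AQ : Matrix (Fin pQ) (Fin m) ℝ) (bQ : Fin pQ → ℝ)
    (BQ : Matrix (Fin qQ) (Fin m) ℝ) (dQ : Fin qQ → ℝ)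
    (Q : Set (Fin m → ℝ)) (hQirr : Irredundant AQ bQ BQ dQ Q)
    (hdim : 4 ≤ spanDim Q)
    (hvert : ∃ v, IsVertex Q v ∧ {F | IsFacet Q F ∧ v ∈ F}.ncard = spanDim Q) :
    ∃ π : (Fin m → ℝ) →ₗ[ℝ] (Fin (spanDim Q - 1) → ℝ),
      spanDim ((fun x => π x) '' Q) = spanDim Q - 1 ∧
      ∃ (pP qP : ℕ)
        (AP : Matrix (Fin pP) (Fin (spanDim Q - 1)) ℝ) (bP : Fin pP → ℝ)
        (BP : Matrix (Fin qP) (Fin (spanDim Q - 1)) ℝ) (dP : Fin qP → ℝ),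
        Irredundant AP bP BP dP ((fun x => π x) '' Q) ∧
        ¬ (circuits AP BP ⊆ (fun x => π x) '' circuits AQ BQ) := by
  obtain ⟨v, hv, hcard⟩ := hvert
  generalize hn : spanDim Q = n at *
  obtain ⟨N, rfl⟩ := Nat.exists_eq_add_of_le' hdim
  exact aux_core hQirr hn v hv hcard
end
end

section
/- For all m, n ∈ ℕ with n ≥ 3 and m ≥ n+3, there exist full-dimensional polytopes P ⊂ ℝⁿ and Q ⊂ ℝᵐ, each equipped with an irredundant description, and a linear map π : ℝᵐ → ℝⁿ with π(Q) = P, such that C(P) ⊆ π(C(Q)), the map π is not injective (and P and Q are not affinely isomorphic: no affine map restricts to a bijection from Q onto P), and some circuit in C(P) is not an edge direction of P. -/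
open Matrix

noncomputable section

open Filter Topology

/-- Moving both ways from a point in a direction tangent to all tight constraints. -/
lemma exists_step {q n : Type*} [Finite q] [Fintype n] (B : Matrix q n ℝ) (d : q → ℝ)
    (p v : n → ℝ) (h : ∀ i, B.mulVec p i < d i ∨ (B.mulVec p i ≤ d i ∧ B.mulVec v i = 0)) :
    ∃ ε : ℝ, 0 < ε ∧ B.mulVec (p + ε • v) ≤ d ∧ B.mulVec (p - ε • v) ≤ d := by
  have key : ∀ᶠ ε : ℝ in 𝓝[>] 0, ∀ i, B.mulVec (p + ε • v) i ≤ d i ∧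
      B.mulVec (p - ε • v) i ≤ d i := by
    rw [eventually_all]
    intro i
    rcases h i with h | ⟨h, h0⟩
    · have c1 : Tendsto (fun ε : ℝ => B.mulVec p i + ε * B.mulVec v i) (𝓝 0)
          (𝓝 (B.mulVec p i + 0 * B.mulVec v i)) :=
        Continuous.tendsto (f := fun ε : ℝ => B.mulVec p i + ε * B.mulVec v i) (by fun_prop) 0
      have c2 : Tendsto (fun ε : ℝ => B.mulVec p i - ε * B.mulVec v i) (𝓝 0)
          (𝓝 (B.mulVec p i - 0 * B.mulVec v i)) :=
        Continuous.tendsto (f := fun ε : ℝ => B.mulVec p i - ε * B.mulVec v i) (by fun_prop) 0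
      have e1 := c1.eventually_lt_const (u := d i) (by simpa using h)
      have e2 := c2.eventually_lt_const (u := d i) (by simpa using h)
      filter_upwards [nhdsWithin_le_nhds e1, nhdsWithin_le_nhds e2] with ε h1 h2
      simp only [mulVec_add, mulVec_sub, mulVec_smul, Pi.add_apply, Pi.sub_apply, Pi.smul_apply,
        smul_eq_mul]
      exact ⟨h1.le, h2.le⟩
    · refine Eventually.of_forall fun ε => ?_
      simp only [mulVec_add, mulVec_sub, mulVec_smul, Pi.add_apply, Pi.sub_apply, Pi.smul_apply,
        smul_eq_mul, h0]
      simpa using h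
  obtain ⟨ε, h1, h2⟩ := (key.and self_mem_nhdsWithin).exists
  exact ⟨ε, h2, fun i => (h1 i).1, fun i => (h1 i).2⟩

lemma mem_poly0 {q n : Type*} [Fintype n] (A : Matrix (Fin 0) n ℝ) (b : Fin 0 → ℝ)
    (B : Matrix q n ℝ) (d : q → ℝ) (x : n → ℝ) : x ∈ polySet A b B d ↔ B.mulVec x ≤ d :=
  ⟨fun h => h.2, fun h => ⟨Subsingleton.elim _ _, h⟩⟩

lemma affineSpan_top {q n : Type*} [Finite q] [Fintype n] (A : Matrix (Fin 0) n ℝ)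
    (b : Fin 0 → ℝ) (B : Matrix q n ℝ) (d : q → ℝ)
    (p : n → ℝ) (hp : ∀ i, B.mulVec p i < d i) : affineSpan ℝ (polySet A b B d) = ⊤ := by
  have hpP : p ∈ polySet A b B d := (mem_poly0 ..).2 fun i => (hp i).le
  rw [← AffineSubspace.direction_eq_top_iff_of_nonempty ⟨p, subset_affineSpan _ _ hpP⟩]
  rw [eq_top_iff]
  intro v _
  obtain ⟨ε, he, h1, -⟩ := exists_step B d p v fun i => Or.inl (hp i)
  have := AffineSubspace.vsub_mem_direction (subset_affineSpan ℝ _ ((mem_poly0 A b B d _).2 h1))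
    (subset_affineSpan ℝ _ hpP)
  rw [vsub_eq_sub, add_sub_cancel_left] at this
  exact (Submodule.smul_mem_iff _ he.ne').1 this

lemma isFacet_of {q : Type*} [Finite q] {n : ℕ} (A : Matrix (Fin 0) (Fin n) ℝ)
    (b : Fin 0 → ℝ) (B : Matrix q (Fin n) ℝ) (d : q → ℝ)
    (hdim : spanDim (polySet A b B d) = n)
    (i : q) (w : Fin n → ℝ) (hw : B.mulVec w i ≠ 0)
    (p : Fin n → ℝ) (hi : B.mulVec p i = d i) (hp : ∀ j, j ≠ i → B.mulVec p j < d j) :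
    IsFacet (polySet A b B d) {x ∈ polySet A b B d | B.mulVec x i = d i} := by
  have hpB : B.mulVec p ≤ d := fun j => by
    by_cases h : j = i
    · subst h; exact hi.le
    · exact (hp j h).le
  have hpP : p ∈ polySet A b B d := (mem_poly0 ..).2 hpB
  refine ⟨Or.inr ⟨B i, d i, fun y hy => hy.2 i, ⟨p, hpP, hi⟩, rfl⟩, ?_⟩
  rw [hdim]
  let f : (Fin n → ℝ) →ₗ[ℝ] ℝ := (LinearMap.proj i).comp B.mulVecLin
  have hf : ∀ x, f x = B.mulVec x i := fun x => rfl
  have hdir : (affineSpan ℝ {x ∈ polySet A b B d | B.mulVec x i = d i}).direction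
      = LinearMap.ker f := by
    apply le_antisymm
    · rw [direction_affineSpan, vectorSpan_def, Submodule.span_le]
      rintro _ ⟨x, hx, y, hy, rfl⟩
      simp only [SetLike.mem_coe, LinearMap.mem_ker, vsub_eq_sub, hf, mulVec_sub, Pi.sub_apply]
      rw [hx.2, hy.2, sub_self]
    · intro v hv
      have hv : B.mulVec v i = 0 := hv
      obtain ⟨ε, he, h1, -⟩ := exists_step B d p v fun j => by
        by_cases h : j = i
        · subst h; exact Or.inr ⟨hi.le, hv⟩
        · exact Or.inl (hp j h)
      have hm : p + ε • v ∈ {x ∈ polySet A b B d | B.mulVec x i = d i} := by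
        refine ⟨(mem_poly0 A b B d _).2 h1, ?_⟩
        simp [mulVec_add, mulVec_smul, hv, hi]
      have hm' : p ∈ {x ∈ polySet A b B d | B.mulVec x i = d i} := ⟨hpP, hi⟩
      have := AffineSubspace.vsub_mem_direction (subset_affineSpan ℝ _ hm)
        (subset_affineSpan ℝ _ hm')
      rw [vsub_eq_sub, add_sub_cancel_left] at this
      exact (Submodule.smul_mem_iff _ he.ne').1 this
  unfold spanDim
  rw [hdir]
  have hsurj : LinearMap.range f = ⊤ := by
    apply LinearMap.range_eq_top.2
    intro t
    refine ⟨(t / f w) • w, ?_⟩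
    have : f w ≠ 0 := hw
    rw [map_smul, smul_eq_mul]
    field_simp
  have := f.finrank_range_add_finrank_ker
  rw [hsurj] at this
  simp at this
  omega

/-- The tilt of the top facet: `x₁ + x₂` for index `0`, zero otherwise. -/
def tiltVal {k : ℕ} (x : Fin (k + 3) → ℝ) (i : Fin (k + 3)) : ℝ :=
  if i = 0 then x 1 + x 2 else 0

/-- The constraint matrix: `-xᵢ` and `xᵢ - tilt`. -/
def cMatS (k : ℕ) : Matrix (Fin (k + 3) ⊕ Fin (k + 3)) (Fin (k + 3)) ℝ :=
  Sum.elim (fun i => -Pi.single i 1)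
    (fun i => Pi.single i 1 - if i = 0 then Pi.single 1 1 + Pi.single 2 1 else 0)

def cMat (k : ℕ) : Matrix (Fin ((k + 3) + (k + 3))) (Fin (k + 3)) ℝ :=
  fun s => cMatS k (finSumFinEquiv.symm s)

def cRhs (k : ℕ) : Fin ((k + 3) + (k + 3)) → ℝ :=
  fun s => Sum.elim (fun _ => 0) (fun _ => 1) (finSumFinEquiv.symm s)

def loI {k : ℕ} (i : Fin (k + 3)) : Fin ((k + 3) + (k + 3)) := finSumFinEquiv (Sum.inl i)
def upI {k : ℕ} (i : Fin (k + 3)) : Fin ((k + 3) + (k + 3)) := finSumFinEquiv (Sum.inr i)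

lemma forall_idx {k : ℕ} {p : Fin ((k + 3) + (k + 3)) → Prop} :
    (∀ s, p s) ↔ (∀ i, p (loI i)) ∧ ∀ i, p (upI i) := by
  rw [finSumFinEquiv.symm.forall_congr_left, Sum.forall]
  rfl

lemma loI_inj {k : ℕ} {i j : Fin (k + 3)} : loI i = loI j ↔ i = j := by simp [loI]
lemma upI_inj {k : ℕ} {i j : Fin (k + 3)} : upI i = upI j ↔ i = j := by simp [upI]
lemma loI_ne {k : ℕ} {i j : Fin (k + 3)} : loI i ≠ upI j := by
  unfold loI upI; intro h; simpa using finSumFinEquiv.injective h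

lemma cMat_lo {k : ℕ} (x : Fin (k + 3) → ℝ) (i) : (cMat k).mulVec x (loI i) = - x i := by
  have : cMat k (loI i) = -Pi.single i 1 := by
    simp only [cMat, cMatS, loI, Equiv.symm_apply_apply, Sum.elim_inl]
  change cMat k (loI i) ⬝ᵥ x = _
  rw [this, neg_dotProduct, single_one_dotProduct]

lemma cMat_up {k : ℕ} (x : Fin (k + 3) → ℝ) (i) :
    (cMat k).mulVec x (upI i) = x i - tiltVal x i := by
  have : cMat k (upI i) =
      Pi.single i 1 - if i = 0 then Pi.single 1 1 + Pi.single 2 1 else 0 := by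
    simp only [cMat, cMatS, upI, Equiv.symm_apply_apply, Sum.elim_inr]
  change cMat k (upI i) ⬝ᵥ x = _
  rw [this, sub_dotProduct, single_one_dotProduct, tiltVal]
  split_ifs
  · rw [add_dotProduct, single_one_dotProduct, single_one_dotProduct]
  · rw [zero_dotProduct]

lemma cRhs_lo {k : ℕ} (i : Fin (k + 3)) : cRhs k (loI i) = 0 := by
  simp only [cRhs, loI, Equiv.symm_apply_apply, Sum.elim_inl]
lemma cRhs_up {k : ℕ} (i : Fin (k + 3)) : cRhs k (upI i) = 1 := by
  simp only [cRhs, upI, Equiv.symm_apply_apply, Sum.elim_inr]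

def thePoly (k : ℕ) : Set (Fin (k + 3) → ℝ) := polySet (0 : Matrix (Fin 0) _ ℝ) 0 (cMat k) (cRhs k)

lemma mem_thePoly {k : ℕ} {x : Fin (k + 3) → ℝ} :
    x ∈ thePoly k ↔ (∀ i, 0 ≤ x i) ∧ ∀ i, x i - tiltVal x i ≤ 1 := by
  rw [thePoly, mem_poly0, Pi.le_def, forall_idx]
  simp [cMat_lo, cMat_up, cRhs_lo, cRhs_up]

lemma fin_two_val (k : ℕ) : ((2 : Fin (k + 3)) : ℕ) = 2 :=
  Nat.mod_eq_of_lt (show 2 < k + 3 by omega)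

lemma fin_one_val (k : ℕ) : ((1 : Fin (k + 3)) : ℕ) = 1 :=
  Nat.mod_eq_of_lt (show 1 < k + 3 by omega)

lemma fin3 (k : ℕ) : (1 : Fin (k + 3)) ≠ 0 ∧ (2 : Fin (k + 3)) ≠ 0 ∧ (2 : Fin (k + 3)) ≠ 1 := by
  refine ⟨?_, ?_, ?_⟩ <;> rw [Ne, Fin.ext_iff] <;>
    simp only [fin_one_val, fin_two_val, Fin.val_zero] <;> omega

lemma int_pt (k : ℕ) : ∀ s, (cMat k).mulVec (fun _ => 1 / 2) s < cRhs k s := by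
  rw [forall_idx]
  refine ⟨fun i => ?_, fun i => ?_⟩
  · rw [cMat_lo, cRhs_lo]; norm_num
  · rw [cMat_up, cRhs_up, tiltVal]; split_ifs <;> norm_num

lemma span_thePoly (k : ℕ) : affineSpan ℝ (thePoly k) = ⊤ :=
  affineSpan_top _ _ _ _ _ (int_pt k)

lemma dim_thePoly (k : ℕ) : spanDim (thePoly k) = k + 3 := by
  unfold spanDim
  rw [span_thePoly, AffineSubspace.direction_top, finrank_top, Module.finrank_fin_fun]

lemma irr_thePoly (k : ℕ) :
    Irredundant (0 : Matrix (Fin 0) _ ℝ) 0 (cMat k) (cRhs k) (thePoly k) := by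
  obtain ⟨h10, h20, h21⟩ := fin3 k
  refine ⟨rfl, ?_, ?_⟩
  · rw [span_thePoly]; ext x; simp
  rw [forall_idx]
  refine ⟨fun i => ?_, fun i => ?_⟩
  · apply isFacet_of _ _ _ _ (dim_thePoly k) _ (Pi.single i 1) (by simp [cMat_lo])
      (Function.update (fun _ => 1 / 2) i 0) (by simp [cMat_lo, cRhs_lo])
    rw [forall_idx]
    refine ⟨fun j hj => ?_, fun j _ => ?_⟩
    · rw [Ne, loI_inj] at hj
      rw [cMat_lo, cRhs_lo, Function.update_of_ne hj]; norm_num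
    · rw [cMat_up, cRhs_up, tiltVal]
      simp only [Function.update_apply]
      split_ifs <;> norm_num
  · apply isFacet_of _ _ _ _ (dim_thePoly k) _ (Pi.single i 1) ?_
      (Function.update (fun _ => 1 / 2) i (if i = 0 then 2 else 1)) ?_
    · rw [forall_idx]
      refine ⟨fun j _ => ?_, fun j hj => ?_⟩
      · rw [cMat_lo, cRhs_lo]
        simp only [Function.update_apply]
        split_ifs <;> norm_num
      · rw [Ne, upI_inj] at hj
        rw [cMat_up, cRhs_up, tiltVal, Function.update_of_ne hj]
        simp only [Function.update_apply]
        split_ifs <;> norm_num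
    · rw [cMat_up, tiltVal]
      split_ifs with h
      · subst h; simp [h10, h20]
      · simp
    · rw [cMat_up, cRhs_up, tiltVal]
      by_cases h : i = 0
      · subst h; simp [h10, h20]; norm_num
      · simp [h]

lemma bdd_thePoly (k : ℕ) : Bornology.IsBounded (thePoly k) := by
  obtain ⟨h10, h20, h21⟩ := fin3 k
  apply (Metric.isBounded_Icc (0 : Fin (k + 3) → ℝ) (fun _ => 3)).subset
  intro x hx
  obtain ⟨h0, h1⟩ := mem_thePoly.1 hx
  refine ⟨fun i => h0 i, fun i => ?_⟩
  have a := h1 i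
  have b := h1 1
  have c := h1 2
  simp only [tiltVal, h10, h20, if_false] at a b c
  split_ifs at a <;> linarith

lemma circ_thePoly (k : ℕ) :
    (Pi.single 1 1 - Pi.single 2 1 : Fin (k + 3) → ℝ) ∈
      circuits (0 : Matrix (Fin 0) _ ℝ) (cMat k) := by
  obtain ⟨h10, h20, h21⟩ := fin3 k
  set g : Fin (k + 3) → ℝ := Pi.single 1 1 - Pi.single 2 1 with hg
  have g1 : g 1 = 1 := by simp [hg, h21.symm]
  have g2 : g 2 = -1 := by simp [hg, h21]
  have go : ∀ i, i ≠ 1 → i ≠ 2 → g i = 0 := fun i h h' => by simp [hg, h, h']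
  refine ⟨Subsingleton.elim _ _, fun h => by simp [h] at g1, ?_⟩
  intro y _ hy hsub
  have hz : ∀ s, (cMat k).mulVec g s = 0 → (cMat k).mulVec y s = 0 := fun s hs => by
    by_contra h; exact hsub h hs
  have yo : ∀ i, i ≠ 1 → i ≠ 2 → y i = 0 := fun i h h' => by
    have := hz (loI i) (by rw [cMat_lo, go i h h', neg_zero])
    rw [cMat_lo] at this; linarith
  have y12 : y 1 + y 2 = 0 := by
    have := hz (upI 0) (by
      rw [cMat_up, go 0 h10.symm h20.symm, tiltVal, if_pos rfl, g1, g2]; norm_num)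
    rw [cMat_up, yo 0 h10.symm h20.symm, tiltVal, if_pos rfl] at this
    linarith
  have y1 : y 1 ≠ 0 := by
    intro h
    apply hy
    funext i
    by_cases hi : i = 1
    · rw [hi, h]; rfl
    by_cases hi' : i = 2
    · rw [hi']; simp; linarith
    · exact yo i hi hi'
  have hyg : y = y 1 • g := by
    funext i
    by_cases hi : i = 1
    · rw [hi]; simp [g1]
    by_cases hi' : i = 2
    · rw [hi']; simp [g2]; linarith
    · simp [yo i hi hi', go i hi hi']
  intro s hs
  have hs : (cMat k).mulVec g s ≠ 0 := hs
  change (cMat k).mulVec y s ≠ 0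
  rw [hyg, mulVec_smul]
  simp [y1, hs]

lemma notEdge_thePoly (k : ℕ) :
    ¬ IsEdgeDirection (thePoly k) (Pi.single 1 1 - Pi.single 2 1 : Fin (k + 3) → ℝ) := by
  obtain ⟨h10, h20, h21⟩ := fin3 k
  set g : Fin (k + 3) → ℝ := Pi.single 1 1 - Pi.single 2 1 with hg
  have g1 : g 1 = 1 := by simp [hg, h21.symm]
  have g2 : g 2 = -1 := by simp [hg, h21]
  have go : ∀ i, i ≠ 1 → i ≠ 2 → g i = 0 := fun i h h' => by simp [hg, h, h']
  rintro ⟨hg0, F, ⟨hF, hd⟩, hgF⟩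
  rcases hF with rfl | ⟨c, s, hle, -, hFeq⟩
  · rw [dim_thePoly] at hd; omega
  have hspan : ∀ v ∈ (affineSpan ℝ F).direction, ∃ a : ℝ, a • g = v := by
    intro v hv
    obtain ⟨a, ha⟩ := (finrank_eq_one_iff_of_nonzero' (⟨g, hgF⟩ : (affineSpan ℝ F).direction)
      (fun h => hg0 (congrArg Subtype.val h))).1 hd ⟨v, hv⟩
    exact ⟨a, congrArg Subtype.val ha⟩
  -- two distinct points of the edge
  have hnt : ∃ x ∈ F, ∃ y ∈ F, x ≠ y := by
    by_contra hcon
    push Not at hcon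
    have hsub : F.Subsingleton := fun x hx y hy => hcon x hx y hy
    have : (affineSpan ℝ F).direction = ⊥ := by
      rw [direction_affineSpan]
      exact vectorSpan_of_subsingleton ℝ hsub
    rw [this] at hgF
    exact hg0 ((Submodule.mem_bot ℝ).1 hgF)
  obtain ⟨x, hx, y, hy, hxy⟩ := hnt
  obtain ⟨a, ha⟩ := hspan (y - x)
    (AffineSubspace.vsub_mem_direction (subset_affineSpan ℝ _ hy) (subset_affineSpan ℝ _ hx))
  have ha0 : a ≠ 0 := by
    rintro rfl
    apply hxy
    rw [zero_smul] at ha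
    exact (sub_eq_zero.1 ha.symm).symm
  have hcoord : ∀ i, y i = x i + a * g i := fun i => by
    have := congrFun ha i
    simp at this; linarith
  rw [hFeq] at hx hy
  obtain ⟨hxP, hxs⟩ := hx
  obtain ⟨hyP, hys⟩ := hy
  obtain ⟨x0, xu⟩ := mem_thePoly.1 hxP
  obtain ⟨y0, yu⟩ := mem_thePoly.1 hyP
  set r : Fin (k + 3) → ℝ := (1 / 2 : ℝ) • (x + y) with hr
  have hri : ∀ i, r i = (x i + y i) / 2 := fun i => by simp [hr]; ring
  have hrt : ∀ i, tiltVal r i = (tiltVal x i + tiltVal y i) / 2 := fun i => by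
    simp only [tiltVal, hri]; split_ifs <;> ring
  have hrs : c ⬝ᵥ r = s := by
    rw [hr, dotProduct_smul, dotProduct_add, hxs, hys, smul_eq_mul]; ring
  have e1 := hcoord 1
  have x1u := xu 1
  have y1u := yu 1
  simp only [tiltVal, h10, if_false] at x1u y1u
  rw [g1] at e1
  have hr1 : 0 < r 1 ∧ r 1 < 1 := by
    have := x0 1
    have := y0 1
    rw [hri]
    rcases lt_or_gt_of_ne ha0 with h | h <;> constructor <;> linarith
  set δ : ℝ := if r 0 = 0 then 0 else 1 with hδ
  set u : Fin (k + 3) → ℝ := Pi.single 1 1 + δ • Pi.single 0 1 with hu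
  have u0 : u 0 = δ := by simp [hu, h10.symm]
  have u1 : u 1 = 1 := by simp [hu, h10]
  have uo : ∀ i, i ≠ 0 → i ≠ 1 → u i = 0 := fun i h h' => by simp [hu, h, h']
  have u2 : u 2 = 0 := uo 2 h20 h21
  have r2 : 0 ≤ r 2 := by rw [hri]; linarith [x0 2, y0 2]
  have rnn : ∀ i, 0 ≤ r i := fun i => by rw [hri]; linarith [x0 i, y0 i]
  have rup : ∀ i, r i - tiltVal r i ≤ 1 := fun i => by
    rw [hri, hrt]; linarith [xu i, yu i]
  obtain ⟨ε, he, hp1, hp2⟩ := exists_step (cMat k) (cRhs k) r u (by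
    rw [forall_idx]
    refine ⟨fun i => ?_, fun i => ?_⟩
    · rw [cMat_lo, cMat_lo, cRhs_lo]
      by_cases hi : i = 1
      · subst hi; left; linarith
      by_cases hi' : i = 0
      · subst hi'
        by_cases h : r 0 = 0
        · right; rw [u0, hδ, if_pos h, h]; simp
        · left; have := lt_of_le_of_ne (rnn 0) (Ne.symm h); linarith
      · right; rw [uo i hi' hi]; exact ⟨by linarith [rnn i], by simp⟩
    · rw [cMat_up, cMat_up, cRhs_up]
      by_cases hi : i = 1
      · subst hi; left; simp only [tiltVal, h10, if_false]; linarith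
      by_cases hi' : i = 0
      · subst hi'
        by_cases h : r 0 = 0
        · left; rw [h, tiltVal, if_pos rfl]; linarith
        · right; refine ⟨rup 0, ?_⟩
          rw [u0, hδ, if_neg h, tiltVal, if_pos rfl, u1, u2]; norm_num
      · right; refine ⟨rup i, ?_⟩
        rw [uo i hi' hi, tiltVal, if_neg hi']; norm_num)
  have hp1' : r + ε • u ∈ thePoly k := (mem_poly0 ..).2 hp1
  have hp2' : r - ε • u ∈ thePoly k := (mem_poly0 ..).2 hp2
  have l1 := hle _ hp1'
  have l2 := hle _ hp2'
  rw [dotProduct_add, hrs] at l1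
  rw [dotProduct_sub, hrs] at l2
  have hm1 : r + ε • u ∈ F := by
    rw [hFeq]; exact ⟨hp1', by rw [dotProduct_add, hrs]; linarith⟩
  have hm2 : r - ε • u ∈ F := by
    rw [hFeq]; exact ⟨hp2', by rw [dotProduct_sub, hrs]; linarith⟩
  obtain ⟨t, ht⟩ := hspan _
    (AffineSubspace.vsub_mem_direction (subset_affineSpan ℝ _ hm1) (subset_affineSpan ℝ _ hm2))
  have t1 := congrFun ht 1
  have t2 := congrFun ht 2
  simp [g1, g2, u1, u2] at t1 t2
  linarith

/-- Restriction to the first coordinates. -/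
def theProj {k j : ℕ} (h : k + 3 ≤ j + 3) : (Fin (j + 3) → ℝ) →ₗ[ℝ] (Fin (k + 3) → ℝ) :=
  LinearMap.funLeft ℝ ℝ (Fin.castLE h)

/-- Extension by zero. -/
def theExt {k : ℕ} (j : ℕ) (x : Fin (k + 3) → ℝ) : Fin (j + 3) → ℝ :=
  fun i => if h : i.1 < k + 3 then x ⟨i.1, h⟩ else 0

lemma proj_apply {k j : ℕ} (h : k + 3 ≤ j + 3) (x : Fin (j + 3) → ℝ) (i) :
    theProj h x i = x (Fin.castLE h i) := rfl

lemma ext_castLE {k j : ℕ} (h : k + 3 ≤ j + 3) (x : Fin (k + 3) → ℝ) (i) :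
    theExt j x (Fin.castLE h i) = x i := by
  simp [theExt]

lemma proj_ext {k j : ℕ} (h : k + 3 ≤ j + 3) (x : Fin (k + 3) → ℝ) :
    theProj h (theExt j x) = x := by
  funext i; rw [proj_apply, ext_castLE]

lemma castLE_lits {k j : ℕ} (h : k + 3 ≤ j + 3) :
    Fin.castLE h 0 = 0 ∧ Fin.castLE h 1 = 1 ∧ Fin.castLE h 2 = 2 := by
  refine ⟨?_, ?_, ?_⟩ <;> rw [Fin.ext_iff] <;>
    simp only [Fin.val_castLE, fin_one_val, fin_two_val, Fin.val_zero]

lemma tilt_proj {k j : ℕ} (h : k + 3 ≤ j + 3) (x : Fin (j + 3) → ℝ) (i : Fin (k + 3)) :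
    tiltVal (theProj h x) i = tiltVal x (Fin.castLE h i) := by
  obtain ⟨h0, h1, h2⟩ := castLE_lits h
  have : Fin.castLE h i = 0 ↔ i = 0 := by
    rw [← h0]; exact (Fin.castLE_injective h).eq_iff
  simp only [tiltVal, this, proj_apply, h1, h2]

lemma tilt_big {k j : ℕ} (x : Fin (j + 3) → ℝ) (i : Fin (j + 3)) (hi : ¬ i.1 < k + 3) :
    tiltVal x i = 0 := by
  rw [tiltVal, if_neg]; rintro rfl; simp at hi

lemma castLE_or {k j : ℕ} (h : k + 3 ≤ j + 3) (i : Fin (j + 3)) :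
    (∃ i', i = Fin.castLE h i') ∨ ¬ i.1 < k + 3 := by
  by_cases hi : i.1 < k + 3
  · exact Or.inl ⟨⟨i.1, hi⟩, rfl⟩
  · exact Or.inr hi

lemma image_thePoly {k j : ℕ} (h : k + 3 ≤ j + 3) :
    (fun x => theProj h x) '' thePoly j = thePoly k := by
  ext x
  constructor
  · rintro ⟨y, hy, rfl⟩
    obtain ⟨h0, h1⟩ := mem_thePoly.1 hy
    refine mem_thePoly.2 ⟨fun i => h0 _, fun i => ?_⟩
    change theProj h y i - tiltVal (theProj h y) i ≤ 1
    rw [tilt_proj, proj_apply]; exact h1 _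
  · intro hx
    obtain ⟨h0, h1⟩ := mem_thePoly.1 hx
    refine ⟨theExt j x, mem_thePoly.2 ⟨fun i => ?_, fun i => ?_⟩, proj_ext h x⟩
    · rcases castLE_or h i with ⟨i', rfl⟩ | hi
      · rw [ext_castLE]; exact h0 _
      · simp [theExt, hi]
    · rcases castLE_or h i with ⟨i', rfl⟩ | hi
      · rw [ext_castLE, ← tilt_proj, proj_ext]; exact h1 _
      · rw [tilt_big _ _ hi]; simp [theExt, hi]

lemma circuits_proj {k j : ℕ} (h : k + 3 ≤ j + 3) :
    circuits (0 : Matrix (Fin 0) _ ℝ) (cMat k) ⊆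
      (fun x => theProj h x) '' circuits (0 : Matrix (Fin 0) _ ℝ) (cMat j) := by
  rintro g ⟨-, hg0, hg⟩
  refine ⟨theExt j g, ⟨Subsingleton.elim _ _, ?_, ?_⟩, proj_ext h g⟩
  · intro h0
    apply hg0
    rw [← proj_ext h g, h0, map_zero]
  intro y _ hy hsub
  have lo : ∀ (z : Fin (j + 3) → ℝ) (i : Fin (k + 3)), (cMat j).mulVec z (loI (Fin.castLE h i)) =
      (cMat k).mulVec (theProj h z) (loI i) := fun z i => by
    rw [cMat_lo, cMat_lo, proj_apply]
  have up : ∀ (z : Fin (j + 3) → ℝ) (i : Fin (k + 3)), (cMat j).mulVec z (upI (Fin.castLE h i)) =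
      (cMat k).mulVec (theProj h z) (upI i) := fun z i => by
    rw [cMat_up, cMat_up, proj_apply, tilt_proj]
  have hz : ∀ s, (cMat j).mulVec (theExt j g) s = 0 → (cMat j).mulVec y s = 0 := fun s hs => by
    by_contra h; exact hsub h hs
  have ybig : ∀ i : Fin (j + 3), ¬ i.1 < k + 3 → y i = 0 := fun i hi => by
    have := hz (loI i) (by rw [cMat_lo]; simp [theExt, hi])
    rw [cMat_lo] at this; linarith
  have hy' : theProj h y ≠ 0 := by
    intro h0
    apply hy
    funext i
    rcases castLE_or h i with ⟨i', rfl⟩ | hi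
    · exact congrFun h0 i'
    · exact ybig i hi
  have hrev := hg (theProj h y) (Subsingleton.elim _ _) hy' (by
    suffices H : ∀ s, (cMat k).mulVec g s = 0 → (cMat k).mulVec (theProj h y) s = 0 from
      fun s hs hs' => hs (H s hs')
    rw [forall_idx]
    refine ⟨fun i hi => ?_, fun i hi => ?_⟩
    · rw [← lo]; apply hz; rw [lo, proj_ext]; exact hi
    · rw [← up]; apply hz; rw [up, proj_ext]; exact hi)
  have hrev' : ∀ s, (cMat k).mulVec (theProj h y) s = 0 → (cMat k).mulVec g s = 0 := fun s hs => by
    by_contra h; exact hrev h hs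
  suffices H : ∀ s, (cMat j).mulVec y s = 0 → (cMat j).mulVec (theExt j g) s = 0 from
    fun s hs hs' => hs (H s hs')
  rw [forall_idx]
  refine ⟨fun i hi => ?_, fun i hi => ?_⟩
  · rcases castLE_or h i with ⟨i', rfl⟩ | hi'
    · rw [lo] at hi ⊢; rw [proj_ext]; exact hrev' _ hi
    · rw [cMat_lo]; simp [theExt, hi']
  · rcases castLE_or h i with ⟨i', rfl⟩ | hi'
    · rw [up] at hi ⊢; rw [proj_ext]; exact hrev' _ hi
    · rw [cMat_up, tilt_big _ _ hi']; simp [theExt, hi']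

lemma exists_ker {k j : ℕ} (h : k < j) (f : (Fin (j + 3) → ℝ) →ₗ[ℝ] (Fin (k + 3) → ℝ)) :
    ∃ v, v ≠ 0 ∧ f v = 0 := by
  have := LinearMap.ker_ne_bot_of_finrank_lt (f := f) (by simpa using h)
  obtain ⟨v, hv, hv0⟩ := (Submodule.ne_bot_iff _).1 this
  exact ⟨v, hv0, hv⟩

lemma no_affine_inj {k j : ℕ} (h : k < j)
    (σ : (Fin (j + 3) → ℝ) →ᵃ[ℝ] (Fin (k + 3) → ℝ)) : ¬ Set.InjOn σ (thePoly j) := by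
  intro hinj
  obtain ⟨v, hv0, hv⟩ := exists_ker h σ.linear
  obtain ⟨ε, he, h1, -⟩ := exists_step (cMat j) (cRhs j) (fun _ => 1 / 2) v
    fun i => Or.inl (int_pt j i)
  have hp : (fun _ => 1 / 2 : Fin (j + 3) → ℝ) ∈ thePoly j :=
    (mem_poly0 ..).2 fun i => (int_pt j i).le
  have := hinj ((mem_poly0 ..).2 h1) hp (by
    have e := σ.map_vadd (fun _ => (1 / 2 : ℝ)) (ε • v)
    rw [map_smul, hv, smul_zero, zero_vadd, vadd_eq_add, add_comm (ε • v)] at e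
    exact e)
  simp [he.ne', hv0] at this

/-- For all `n ≥ 3` and `m ≥ n+3` there exist full-dimensional polytopes
`P ⊂ ℝⁿ`, `Q ⊂ ℝᵐ` with irredundant descriptions and a linear `π` with `π(Q) = P` such that
`C(P) ⊆ π(C(Q))`, `π` is not injective (and no affine map restricts to a bijection from `Q`
onto `P`), yet some circuit of `P` is not an edge direction of `P`. -/
theorem stmt_19 (n m : ℕ) (hn : 3 ≤ n) (hm : n + 3 ≤ m) :
    ∃ (pP qP pQ qQ : ℕ)
      (AP : Matrix (Fin pP) (Fin n) ℝ) (bP : Fin pP → ℝ)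
      (BP : Matrix (Fin qP) (Fin n) ℝ) (dP : Fin qP → ℝ)
      (AQ : Matrix (Fin pQ) (Fin m) ℝ) (bQ : Fin pQ → ℝ)
      (BQ : Matrix (Fin qQ) (Fin m) ℝ) (dQ : Fin qQ → ℝ)
      (P : Set (Fin n → ℝ)) (Q : Set (Fin m → ℝ))
      (π : (Fin m → ℝ) →ₗ[ℝ] (Fin n → ℝ)),
      Irredundant AP bP BP dP P ∧ Irredundant AQ bQ BQ dQ Q ∧
      -- P and Q are full-dimensional polytopes
      Bornology.IsBounded P ∧ Bornology.IsBounded Q ∧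
      spanDim P = n ∧ spanDim Q = m ∧
      (fun x => π x) '' Q = P ∧
      circuits AP BP ⊆ (fun x => π x) '' circuits AQ BQ ∧
      ¬ Function.Injective π ∧
      (¬ ∃ σ : (Fin m → ℝ) →ᵃ[ℝ] (Fin n → ℝ), Set.BijOn σ Q P) ∧
      ∃ g ∈ circuits AP BP, ¬ IsEdgeDirection P g := by
  obtain ⟨k, rfl⟩ : ∃ k, n = k + 3 := ⟨n - 3, by omega⟩
  obtain ⟨j, rfl⟩ : ∃ j, m = j + 3 := ⟨m - 3, by omega⟩
  have hkj : k < j := by omega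
  have h : k + 3 ≤ j + 3 := by omega
  refine ⟨0, _, 0, _, 0, 0, cMat k, cRhs k, 0, 0, cMat j, cRhs j, thePoly k, thePoly j,
    theProj h, irr_thePoly k, irr_thePoly j, bdd_thePoly k, bdd_thePoly j, dim_thePoly k,
    dim_thePoly j, image_thePoly h, circuits_proj h, ?_, ?_, _, circ_thePoly k,
    notEdge_thePoly k⟩
  · intro hinj
    obtain ⟨v, hv0, hv⟩ := exists_ker hkj (theProj h)
    exact hv0 (hinj (hv.trans (map_zero _).symm))
  · rintro ⟨σ, hσ⟩
    exact no_affine_inj hkj σ hσ.injOn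
end
end
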